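/- arXiv:2502.11016 — 4 statements merged into one kernel-verified Lean document; each statement's English description precedes it below -/
import Mathlib

section
/- Consider the autonomous model (2) with I_i = 0 for all i and kernels satisfying ∑_{l=0}^∞ |ζ_{ijl}| = 1 for all i,j. If the activation functions satisfy hypothesis (H6) and the matrix M is an M-matrix, then the zero solution is globally attractive: every solution x : ℤ → ℝⁿ of model (2) with initial time σ ∈ ℕ and bounded initial condition satisfies |x(m)| → 0 as m → ∞. (Corollary 3.1, item i.) -/
/-!
Let `u j` be the asymptotic size of the `j`-th coordinate, that is, the least `K ≥ 0` with
`|x m j| ≤ K + δ` eventually, for every `δ > 0`; it is finite because the activation functions are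
bounded and `|a i| < 1`. Under (H6) each activation function `h` with constant `H` satisfies
`|h t| < H * |t|` for `t ≠ 0`, so by compactness of `[-u j, u j]` the signal `h (x m j)` has
asymptotic size at most `θ * (H * u j)` for every `θ < 1` close enough to `1`
(`AsympLe.eventually_comp`). A summable kernel with `∑ |ζ| = 1` does not increase the asymptotic
size of a bounded signal (`AsympLe.convolution`, a dominated convergence argument). Writing `N` for
the matrix of interaction weights, the model equation therefore gives
`u i ≤ |a i| * u i + θ * (N u) i` with one common `θ < 1`, whence `(M u) i < 0` whenever `u i > 0`.

This is impossible unless `u = 0` when all principal minors of `M` are nonnegative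
(`eq_zero_of_minors_nonneg`): otherwise some nonnegative diagonal `W` satisfies
`(1 + W M) u = 0`, although `det (1 + W M)`, being the sum of all principal minors of `W M`, is at
least the empty minor `1`.
-/

open Filter Topology

/-! ### Matrices with nonnegative principal minors -/

/-- The determinant of `1 + A` is the sum of all principal minors of `A`, one of which is the empty
minor `1`. -/
lemma one_le_det_one_add {n : ℕ} (A : Matrix (Fin n) (Fin n) ℝ)
    (hA : ∀ s : Finset (Fin n),
      0 ≤ (A.submatrix (fun i : s => (i : Fin n)) (fun j : s => (j : Fin n))).det) :
    1 ≤ (A + 1).det := by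
  have h : (A + 1).det = ∑ s : Finset (Fin n),
      (A.submatrix (fun i : s => (i : Fin n)) (fun j : s => (j : Fin n))).det := by
    have h1 := (Matrix.detRowAlternating (R := ℝ) (n := Fin n)).map_add_univ A.row
      (1 : Matrix (Fin n) (Fin n) ℝ).row
    refine h1.trans (Finset.sum_congr rfl fun s _ => ?_)
    exact Matrix.det_piecewise_one_eq_submatrix_det A s
  rw [h]
  calc (1 : ℝ) = (A.submatrix (fun i : (∅ : Finset (Fin n)) => (i : Fin n))
        (fun j : (∅ : Finset (Fin n)) => (j : Fin n))).det := by
          rw [Matrix.det_isEmpty]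
    _ ≤ _ := Finset.single_le_sum (f := fun s : Finset (Fin n) =>
        (A.submatrix (fun i : s => (i : Fin n)) (fun j : s => (j : Fin n))).det)
        (fun s _ => hA s) (Finset.mem_univ ∅)

/-- A matrix with nonnegative principal minors cannot strictly reverse the sign of all positive
coordinates of a nonzero nonnegative vector. -/
lemma eq_zero_of_minors_nonneg {n : ℕ} (A : Matrix (Fin n) (Fin n) ℝ)
    (hA : ∀ s : Finset (Fin n),
      0 ≤ (A.submatrix (fun i : s => (i : Fin n)) (fun j : s => (j : Fin n))).det)
    (u : Fin n → ℝ) (hu : ∀ i, 0 ≤ u i) (h : ∀ i, 0 < u i → A.mulVec u i < 0) :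
    u = 0 := by
  by_contra hne
  -- The weights are chosen so that `u i + w i * (A u) i = 0` for every `i`.
  let w : Fin n → ℝ := fun i => if 0 < u i then -u i / A.mulVec u i else 0
  have hw : ∀ i, 0 ≤ w i := by
    intro i
    simp only [w]
    split_ifs with hi
    · exact div_nonneg_of_nonpos (by linarith) (h i hi).le
    · exact le_rfl
  let B : Matrix (Fin n) (Fin n) ℝ := Matrix.of fun i j => w i * A i j
  have hB : 1 ≤ (B + 1).det := by
    apply one_le_det_one_add
    intro s
    have := Matrix.det_mul_column (fun i : s => w i)
      (A.submatrix (fun i : s => (i : Fin n)) (fun j : s => (j : Fin n)))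
    have h2 : (B.submatrix (fun i : s => (i : Fin n)) (fun j : s => (j : Fin n))).det =
      (∏ i : s, w i) *
        (A.submatrix (fun i : s => (i : Fin n)) (fun j : s => (j : Fin n))).det := this
    rw [h2]
    exact mul_nonneg (Finset.prod_nonneg fun i _ => hw i) (hA s)
  have h0 : (B + 1).det = 0 := by
    refine Matrix.exists_mulVec_eq_zero_iff.mp ⟨u, hne, ?_⟩
    rw [Matrix.add_mulVec, Matrix.one_mulVec]
    funext i
    have h1 : B.mulVec u i = w i * A.mulVec u i := by
      simp only [Matrix.mulVec, dotProduct, B, Matrix.of_apply, Finset.mul_sum, mul_assoc]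
    simp only [Pi.add_apply, Pi.zero_apply, h1, w]
    split_ifs with hi
    · have := (h i hi).ne
      field_simp
      ring
    · linarith [hu i]
  linarith

/-! ### Asymptotic bounds of signals -/

/-- `AsympLe y K` says that `limsup |y m| ≤ K` as `m → ∞`, in the form that `|y m| ≤ K + δ`
eventually, for every `δ > 0`. -/
def AsympLe (y : ℤ → ℝ) (K : ℝ) : Prop :=
  ∀ δ : ℝ, 0 < δ → ∀ᶠ m in atTop, |y m| ≤ K + δ

namespace AsympLe

lemma of_bound {y : ℤ → ℝ} {K : ℝ} (h : ∀ m, |y m| ≤ K) : AsympLe y K :=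
  fun δ hδ => Eventually.of_forall fun m => by linarith [h m]

lemma mono {y : ℤ → ℝ} {K L : ℝ} (h : AsympLe y K) (hKL : K ≤ L) : AsympLe y L :=
  fun δ hδ => (h δ hδ).mono fun m hm => by linarith

lemma congr {y z : ℤ → ℝ} {K : ℝ} (h : AsympLe y K) (hyz : ∀ᶠ m in atTop, z m = y m) :
    AsympLe z K := by
  intro δ hδ
  filter_upwards [h δ hδ, hyz] with m h1 h2
  rwa [h2]

lemma add {y z : ℤ → ℝ} {K L : ℝ} (hy : AsympLe y K) (hz : AsympLe z L) :
    AsympLe (fun m => y m + z m) (K + L) := by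
  intro δ hδ
  filter_upwards [hy (δ / 2) (by linarith), hz (δ / 2) (by linarith)] with m h1 h2
  linarith [abs_add_le (y m) (z m)]

lemma sum {ι : Type*} (s : Finset ι) {y : ι → ℤ → ℝ} {K : ι → ℝ}
    (h : ∀ i, AsympLe (y i) (K i)) : AsympLe (fun m => ∑ i ∈ s, y i m) (∑ i ∈ s, K i) := by
  classical
  induction s using Finset.induction_on with
  | empty => exact of_bound fun m => by simp
  | insert i s hi ih => simpa only [Finset.sum_insert hi] using (h i).add ih

lemma const_mul {y : ℤ → ℝ} {K : ℝ} (r : ℝ) (h : AsympLe y K) :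
    AsympLe (fun m => r * y m) (|r| * K) := by
  intro δ hδ
  have hr : 0 < |r| + 1 := by positivity
  filter_upwards [h (δ / (|r| + 1)) (by positivity)] with m hm
  have h1 : |r| * (δ / (|r| + 1)) ≤ δ := by
    rw [← mul_div_assoc, div_le_iff₀ hr]
    nlinarith
  rw [abs_mul]
  nlinarith [abs_nonneg r]

lemma shift {y : ℤ → ℝ} {K : ℝ} (h : AsympLe y K) (k : ℤ) :
    AsympLe (fun m => y (m + k)) K :=
  fun δ hδ => (tendsto_atTop_add_const_right atTop k tendsto_id).eventually (h δ hδ)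

lemma delay {y : ℤ → ℝ} {K : ℝ} (h : AsympLe y K) (k : ℤ) :
    AsympLe (fun m => y (m - k)) K := by
  simpa only [sub_eq_add_neg] using h.shift (-k)

/-- The set of asymptotic bounds contains its infimum. -/
lemma exists_least {y : ℤ → ℝ} {B : ℝ} (hB : 0 ≤ B) (h : AsympLe y B) :
    ∃ u, 0 ≤ u ∧ AsympLe y u ∧ ∀ K, 0 ≤ K → AsympLe y K → u ≤ K := by
  let S : Set ℝ := {K | 0 ≤ K ∧ AsympLe y K}
  have hne : S.Nonempty := ⟨B, hB, h⟩
  have hbdd : BddBelow S := ⟨0, fun K hK => hK.1⟩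
  refine ⟨sInf S, le_csInf hne fun K hK => hK.1, fun δ hδ => ?_,
    fun K h0 hK => csInf_le hbdd ⟨h0, hK⟩⟩
  obtain ⟨K, hK, hlt⟩ := exists_lt_of_csInf_lt hne (show sInf S < sInf S + δ / 2 by linarith)
  exact (hK.2 (δ / 2) (by linarith)).mono fun m hm => by linarith

/-- A strictly sublinear activation function contracts asymptotic bounds strictly: the values of
`|h|` on a slightly enlarged interval `[-u - δ, u + δ]` stay below some constant `< H * u`. -/
lemma eventually_comp {y : ℤ → ℝ} {u : ℝ} (hu : 0 ≤ u) (hy : AsympLe y u) {h : ℝ → ℝ} {H : ℝ}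
    (hc : Continuous h) (hle : ∀ t, |h t| ≤ H * |t|) (hlt : ∀ t, t ≠ 0 → |h t| < H * |t|)
    (hH : 0 < H) :
    ∀ᶠ θ in 𝓝[<] (1 : ℝ), AsympLe (fun m => h (y m)) (θ * (H * u)) := by
  rcases hu.eq_or_lt with rfl | hu
  · refine Eventually.of_forall fun θ => ?_
    intro δ hδ
    filter_upwards [hy (δ / H) (by positivity)] with m hm
    calc |h (y m)| ≤ H * |y m| := hle _
      _ ≤ H * (0 + δ / H) := by gcongr
      _ = θ * (H * 0) + δ := by field_simp; ring
  · have hopen : IsOpen {t | |h t| < H * u} := isOpen_lt hc.abs continuous_const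
    have hsub : Metric.closedBall (0 : ℝ) u ⊆ {t | |h t| < H * u} := by
      intro t ht
      rw [mem_closedBall_zero_iff, Real.norm_eq_abs] at ht
      by_cases h0 : t = 0
      · have := hle t
        rw [h0, abs_zero, mul_zero] at this
        rw [h0]
        exact this.trans_lt (by positivity)
      · exact (hlt t h0).trans_le (by gcongr)
    obtain ⟨δ, hδ, hsub'⟩ :=
      (isCompact_closedBall (0 : ℝ) u).exists_cthickening_subset_open hopen hsub
    rw [cthickening_closedBall hδ.le hu.le] at hsub'
    obtain ⟨t₀, ht₀, hmax⟩ := (isCompact_closedBall (0 : ℝ) (δ + u)).exists_isMaxOn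
      ⟨0, Metric.mem_closedBall_self (by positivity)⟩ hc.abs.continuousOn
    have hK : |h t₀| < 1 * (H * u) := by simpa using hsub' ht₀
    have hlim : Tendsto (fun θ : ℝ => θ * (H * u)) (𝓝[<] 1) (𝓝 (1 * (H * u))) :=
      (Continuous.tendsto (by fun_prop) 1).mono_left nhdsWithin_le_nhds
    filter_upwards [hlim.eventually (lt_mem_nhds hK)] with θ hθ
    intro ε hε
    filter_upwards [hy δ hδ] with m hm
    have : |h (y m)| ≤ |h t₀| :=
      hmax (mem_closedBall_zero_iff.mpr (by rw [Real.norm_eq_abs]; linarith))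
    linarith

/-- Convolution with a kernel of total mass `1` preserves asymptotic bounds of bounded signals. -/
lemma convolution {y : ℤ → ℝ} {C K : ℝ} (hC : ∀ m, |y m| ≤ C) (hK : 0 ≤ K) (hy : AsympLe y K)
    {ζ : ℕ → ℝ} (hζ : ∑' l, |ζ l| = 1) :
    AsympLe (fun m => ∑' l : ℕ, ζ l * y (m - l)) K := by
  have hs : Summable fun l => |ζ l| := by
    by_contra hn
    rw [tsum_eq_zero_of_not_summable hn] at hζ
    exact zero_ne_one hζ
  have hC0 : 0 ≤ C := (abs_nonneg _).trans (hC 0)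
  -- The excess of `|y|` over `K`: bounded, and tending to `0`.
  let e : ℤ → ℝ := fun m => max (|y m| - K) 0
  have he0 : ∀ m, 0 ≤ e m := fun m => le_max_right _ _
  have heC : ∀ m, e m ≤ C := fun m => max_le (by linarith [hC m]) hC0
  have hye : ∀ m, |y m| ≤ K + e m := fun m => by linarith [le_max_left (|y m| - K) 0]
  have he : Tendsto e atTop (𝓝 0) := by
    rw [Metric.tendsto_nhds]
    intro ε hε
    filter_upwards [hy (ε / 2) (by linarith)] with m hm
    rw [Real.dist_eq, sub_zero, abs_of_nonneg (he0 m)]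
    exact max_lt (by linarith) hε
  have hse : ∀ m : ℤ, Summable fun l : ℕ => |ζ l| * e (m - l) := fun m =>
    Summable.of_nonneg_of_le (fun l => mul_nonneg (abs_nonneg _) (he0 _))
      (fun l => mul_le_mul_of_nonneg_left (heC _) (abs_nonneg _)) (hs.mul_right C)
  have hlim : Tendsto (fun m : ℤ => ∑' l : ℕ, |ζ l| * e (m - l)) atTop (𝓝 0) := by
    have := tendsto_tsum_of_dominated_convergence (𝓕 := (atTop : Filter ℤ))
      (f := fun m (l : ℕ) => |ζ l| * e (m - l)) (g := fun _ => 0)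
      (bound := fun l => |ζ l| * C) (hs.mul_right C)
      (fun l => by
        have h1 : Tendsto (fun m : ℤ => e (m - l)) atTop (𝓝 0) :=
          he.comp (tendsto_atTop_add_const_right atTop (-(l : ℤ)) tendsto_id)
        simpa using h1.const_mul |ζ l|)
      (Eventually.of_forall fun m l => by
        rw [Real.norm_eq_abs, abs_of_nonneg (mul_nonneg (abs_nonneg _) (he0 _))]
        exact mul_le_mul_of_nonneg_left (heC _) (abs_nonneg _))
    simpa using this
  intro δ hδ
  filter_upwards [hlim.eventually (gt_mem_nhds hδ)] with m hm
  have hb : ∀ l : ℕ, ‖ζ l * y (m - l)‖ ≤ |ζ l| * K + |ζ l| * e (m - l) := fun l => by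
    rw [Real.norm_eq_abs, abs_mul, ← mul_add]
    exact mul_le_mul_of_nonneg_left (hye _) (abs_nonneg _)
  have h1 := tsum_of_norm_bounded (((hs.mul_right K).add (hse m)).hasSum) hb
  rw [(hs.mul_right K).tsum_add (hse m), tsum_mul_right, hζ, one_mul, Real.norm_eq_abs] at h1
  linarith

end AsympLe

/-! ### Boundedness and convergence of solutions -/

/-- A kernel of total mass `1` preserves bounds. -/
lemma abs_tsum_kernel_le {ζ w : ℕ → ℝ} {C : ℝ} (hw : ∀ l, |w l| ≤ C) (hζ : ∑' l, |ζ l| = 1) :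
    |∑' l, ζ l * w l| ≤ C := by
  have hs : Summable fun l => |ζ l| := by
    by_contra hn
    rw [tsum_eq_zero_of_not_summable hn] at hζ
    exact zero_ne_one hζ
  have hb : ∀ l, ‖ζ l * w l‖ ≤ |ζ l| * C := fun l => by
    rw [Real.norm_eq_abs, abs_mul]
    exact mul_le_mul_of_nonneg_left (hw _) (abs_nonneg _)
  have h1 := tsum_of_norm_bounded (hs.mul_right C).hasSum hb
  rwa [tsum_mul_right, hζ, one_mul, Real.norm_eq_abs] at h1

/-- A delayed scalar recursion `y (m + 1) = r * y (m - k) + O(R)` with `|r| < 1` and bounded past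
is bounded. -/
lemma exists_bound_of_recursion {y : ℤ → ℝ} {σ k : ℕ} {r R B : ℝ} (hr : |r| < 1)
    (hB : ∀ m : ℤ, m ≤ σ → |y m| ≤ B)
    (hrec : ∀ m : ℕ, σ ≤ m → |y (m + 1) - r * y (m - k)| ≤ R) :
    ∃ C, 0 ≤ C ∧ ∀ m, |y m| ≤ C := by
  have hr' : 0 < 1 - |r| := by linarith
  -- `R / (1 - |r|)` is the fixed point of `C ↦ |r| * C + R`.
  let C := max B (R / (1 - |r|))
  have hBC : B ≤ C := le_max_left _ _
  have hRC : |r| * C + R ≤ C := by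
    have : R / (1 - |r|) ≤ C := le_max_right _ _
    rw [div_le_iff₀ hr'] at this
    linarith
  have key : ∀ N : ℕ, ∀ m : ℤ, m ≤ σ + N → |y m| ≤ C := by
    intro N
    induction N with
    | zero => exact fun m hm => (hB m (by simpa using hm)).trans hBC
    | succ N ih =>
      intro m hm
      rcases (show m ≤ σ + N ∨ m = ((σ + N : ℕ) : ℤ) + 1 by push_cast at hm ⊢; omega) with h | h
      · exact ih m h
      · have h1 := hrec (σ + N) (by omega)
        have h2 := ih (((σ + N : ℕ) : ℤ) - k) (by push_cast; omega)
        rw [h]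
        have h3 := abs_sub_abs_le_abs_sub (y (((σ + N : ℕ) : ℤ) + 1))
          (r * y (((σ + N : ℕ) : ℤ) - k))
        rw [abs_mul] at h3
        have h4 := mul_le_mul_of_nonneg_left h2 (abs_nonneg r)
        linarith
  exact ⟨C, (abs_nonneg _).trans ((hB σ le_rfl).trans hBC),
    fun m => key m.toNat m (by have := Int.self_le_toNat m; omega)⟩

/-- The consequences of (H6) for one activation function. -/
lemma activation_bounds {h : ℝ → ℝ} {H : ℝ} (hH : Continuous h ∧ 0 < H ∧
      (∀ u : ℝ, 1 < |u| → |h u| ≤ H) ∧ (∀ u : ℝ, u ≠ 0 → |u| ≤ 1 → |h u| < H * |u|)) :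
    (∀ t, t ≠ 0 → |h t| < H * |t|) ∧ (∀ t, |h t| ≤ H * |t|) ∧ (∀ t, |h t| ≤ H) := by
  obtain ⟨hc, hpos, hbig, hsmall⟩ := hH
  have hlt : ∀ t, t ≠ 0 → |h t| < H * |t| := by
    intro t ht
    rcases le_or_gt |t| 1 with h1 | h1
    · exact hsmall t ht h1
    · exact (hbig t h1).trans_lt (by nlinarith)
  -- The value at `0` is only constrained through continuity.
  have hle : ∀ t, |h t| ≤ H * |t| := by
    have hcl : IsClosed {t | |h t| ≤ H * |t|} := isClosed_le hc.abs (by fun_prop)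
    have hd : Dense ({0}ᶜ : Set ℝ) := dense_compl_singleton 0
    have := hcl.closure_subset_iff.mpr (fun t (ht : t ∈ ({0}ᶜ : Set ℝ)) => (hlt t ht).le)
    intro t
    exact this (hd t)
  refine ⟨hlt, hle, fun t => ?_⟩
  rcases le_or_gt |t| 1 with h1 | h1
  · exact (hle t).trans (by nlinarith)
  · exact hbig t h1


/-- A real square matrix with non-positive off-diagonal entries is an `M`-matrix
if all its principal minors are nonnegative. -/
def IsMMatrix {n : ℕ} (A : Matrix (Fin n) (Fin n) ℝ) : Prop :=
  (∀ i j, i ≠ j → A i j ≤ 0) ∧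
  ∀ s : Finset (Fin n),
    0 ≤ (A.submatrix (fun i : s => (i : Fin n)) (fun j : s => (j : Fin n))).det

/-- Corollary 3.1, item i: for the autonomous model (2) with zero inputs, kernels with
`∑ |ζ| = 1`, activation functions satisfying (H6), and `M` an M-matrix, the zero
solution is globally attractive. -/
theorem autonomous_global_attractivity_H6
    (n P : ℕ) (hn : 1 ≤ n) (hP : 1 ≤ P)
    (a : Fin n → ℝ) (ha : ∀ i, -1 < a i ∧ a i < 1)
    (ν : Fin n → ℕ) (τ : Fin n → Fin n → Fin P → ℕ)
    (b : Fin n → Fin n → Fin P → ℝ) (c : Fin n → Fin n → ℝ)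
    (I : Fin n → ℝ)
    (ζ : Fin n → Fin n → ℕ → ℝ)
    (f : Fin n → Fin n → Fin P → ℝ → ℝ)
    (g : Fin n → Fin n → ℝ → ℝ)
    (F : Fin n → Fin n → Fin P → ℝ)
    (G : Fin n → Fin n → ℝ)
    (σ : ℕ) (x : ℤ → Fin n → ℝ)
    -- `x` has bounded initial condition: it is bounded on `(-∞, σ] ∩ ℤ`
    (hinit : ∃ B : ℝ, ∀ m : ℤ, m ≤ (σ : ℤ) → ‖x m‖ ≤ B)
    -- the inner series converge absolutely
    (habs : ∀ (i j : Fin n) (m : ℤ), Summable fun l : ℕ => |ζ i j l * g i j (x (m - l) j)|)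
    -- `x` is a solution of the autonomous model (2) from the initial time `σ` on
    (hmodel : ∀ m : ℕ, σ ≤ m → ∀ i : Fin n,
      x ((m : ℤ) + 1) i =
        a i * x ((m : ℤ) - ν i) i
        + ∑ j, ∑ p, b i j p * f i j p (x ((m : ℤ) - τ i j p) j)
        + ∑ j, c i j * ∑' l : ℕ, ζ i j l * g i j (x ((m : ℤ) - l) j)
        + I i)
    -- (H4): the kernels satisfy `∑ l, |ζ i j l| = 1`
    (hH4 : ∀ i j, ∑' l : ℕ, |ζ i j l| = 1)
    -- zero external inputs
    (hI : ∀ i, I i = 0)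
    -- (H6)
    (hH6f : ∀ i j p, Continuous (f i j p) ∧ 0 < F i j p ∧
      (∀ u : ℝ, 1 < |u| → |f i j p u| ≤ F i j p) ∧
      (∀ u : ℝ, u ≠ 0 → |u| ≤ 1 → |f i j p u| < F i j p * |u|))
    (hH6g : ∀ i j, Continuous (g i j) ∧ 0 < G i j ∧
      (∀ u : ℝ, 1 < |u| → |g i j u| ≤ G i j) ∧
      (∀ u : ℝ, u ≠ 0 → |u| ≤ 1 → |g i j u| < G i j * |u|))
    -- the matrix `M` is an M-matrix
    (hM : IsMMatrix (Matrix.of fun i j : Fin n =>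
        (if i = j then 1 - |a i| else 0)
        - (|c i j| * G i j + ∑ p, |b i j p| * F i j p))) :
    Filter.Tendsto (fun m : ℤ => ‖x m‖) Filter.atTop (nhds 0) := by
  have ha' : ∀ i, |a i| < 1 := fun i => abs_lt.mpr (ha i)
  have hf := fun i j p => activation_bounds (hH6f i j p)
  have hg := fun i j => activation_bounds (hH6g i j)
  -- All solutions are bounded.
  have hbdd : ∀ i, ∃ C, 0 ≤ C ∧ ∀ m, |x m i| ≤ C := by
    obtain ⟨B, hB⟩ := hinit
    intro i
    refine exists_bound_of_recursion (σ := σ) (k := ν i) (r := a i) (B := B)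
      (R := ∑ j, ∑ p, |b i j p| * F i j p + ∑ j, |c i j| * G i j) (ha' i)
      (fun m hm => (norm_le_pi_norm (x m) i).trans (hB m hm)) fun m hm => ?_
    rw [hmodel m hm i, hI i, add_zero, add_assoc, add_sub_cancel_left]
    refine (abs_add_le _ _).trans (add_le_add ?_ ?_)
    · refine (Finset.abs_sum_le_sum_abs _ _).trans (Finset.sum_le_sum fun j _ => ?_)
      refine (Finset.abs_sum_le_sum_abs _ _).trans (Finset.sum_le_sum fun p _ => ?_)
      rw [abs_mul]
      exact mul_le_mul_of_nonneg_left ((hf i j p).2.2 _) (abs_nonneg _)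
    · refine (Finset.abs_sum_le_sum_abs _ _).trans (Finset.sum_le_sum fun j _ => ?_)
      rw [abs_mul]
      exact mul_le_mul_of_nonneg_left
        (abs_tsum_kernel_le (fun l => (hg i j).2.2 _) (hH4 i j)) (abs_nonneg _)
  have hleast : ∀ i, ∃ u, 0 ≤ u ∧ AsympLe (fun m => x m i) u ∧
      ∀ K, 0 ≤ K → AsympLe (fun m => x m i) K → u ≤ K := fun i =>
    let ⟨_, hC0, hC⟩ := hbdd i
    AsympLe.exists_least hC0 (AsympLe.of_bound hC)
  choose u hu0 hu hmin using hleast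
  -- A contraction factor that serves all activation functions at once.
  obtain ⟨θ, ⟨⟨hθf, hθg⟩, hθ0⟩, hθ1⟩ : ∃ θ : ℝ, (((∀ i j p,
      AsympLe (fun m => f i j p (x m j)) (θ * (F i j p * u j))) ∧
      (∀ i j, AsympLe (fun m => g i j (x m j)) (θ * (G i j * u j)))) ∧ 0 < θ) ∧ θ < 1 := by
    have h1 : ∀ᶠ θ in 𝓝[<] (1 : ℝ), ∀ i j p,
        AsympLe (fun m => f i j p (x m j)) (θ * (F i j p * u j)) := by
      simp only [eventually_all]
      exact fun i j p => AsympLe.eventually_comp (hu0 j) (hu j) (hH6f i j p).1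
        (hf i j p).2.1 (hf i j p).1 (hH6f i j p).2.1
    have h2 : ∀ᶠ θ in 𝓝[<] (1 : ℝ), ∀ i j,
        AsympLe (fun m => g i j (x m j)) (θ * (G i j * u j)) := by
      simp only [eventually_all]
      exact fun i j => AsympLe.eventually_comp (hu0 j) (hu j) (hH6g i j).1
        (hg i j).2.1 (hg i j).1 (hH6g i j).2.1
    have h3 : ∀ᶠ θ in 𝓝[<] (1 : ℝ), 0 < θ :=
      nhdsWithin_le_nhds (lt_mem_nhds one_pos)
    exact (((h1.and h2).and h3).and self_mem_nhdsWithin).exists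
  let N : Fin n → Fin n → ℝ := fun i j => |c i j| * G i j + ∑ p, |b i j p| * F i j p
  have hN : ∀ i j, 0 ≤ N i j := fun i j =>
    add_nonneg (mul_nonneg (abs_nonneg _) (hH6g i j).2.1.le)
      (Finset.sum_nonneg fun p _ => mul_nonneg (abs_nonneg _) (hH6f i j p).2.1.le)
  have hNu : ∀ i, 0 ≤ ∑ j, N i j * u j := fun i =>
    Finset.sum_nonneg fun j _ => mul_nonneg (hN i j) (hu0 j)
  -- The model equation, read asymptotically.
  have hineq : ∀ i, u i ≤ |a i| * u i + θ * ∑ j, N i j * u j := by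
    intro i
    refine hmin i _ (add_nonneg (mul_nonneg (abs_nonneg _) (hu0 i))
      (mul_nonneg hθ0.le (hNu i))) ?_
    have hA := ((hu i).delay (ν i)).const_mul (a i)
    have hB := AsympLe.sum Finset.univ fun j => AsympLe.sum Finset.univ fun p =>
      ((hθf i j p).delay (τ i j p)).const_mul (b i j p)
    have hC := AsympLe.sum Finset.univ fun j =>
      (AsympLe.convolution (fun m => (hg i j).2.2 _)
        (mul_nonneg hθ0.le (mul_nonneg (hH6g i j).2.1.le (hu0 j))) (hθg i j)
        (hH4 i j)).const_mul (c i j)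
    have hstep : AsympLe (fun m => x (m + 1) i) (|a i| * u i + θ * ∑ j, N i j * u j) := by
      refine (((hA.add hB).add hC).mono (le_of_eq ?_)).congr ?_
      · rw [add_assoc, ← Finset.sum_add_distrib, Finset.mul_sum]
        congr 1
        refine Finset.sum_congr rfl fun j _ => ?_
        simp only [N, add_mul, mul_add, Finset.sum_mul, Finset.mul_sum]
        rw [add_comm]
        congr 1
        · ring
        · exact Finset.sum_congr rfl fun p _ => by ring
      · filter_upwards [eventually_ge_atTop (σ : ℤ)] with m hm
        lift m to ℕ using by omega
        rw [hmodel m (by exact_mod_cast hm) i, hI i, add_zero]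
    simpa using hstep.shift (-1)
  have hzero : u = 0 := by
    refine eq_zero_of_minors_nonneg _ hM.2 u hu0 fun i hi => ?_
    have h1 : (Matrix.of fun i j : Fin n => (if i = j then 1 - |a i| else 0)
        - (|c i j| * G i j + ∑ p, |b i j p| * F i j p)).mulVec u i
        = (1 - |a i|) * u i - ∑ j, N i j * u j := by
      simp [Matrix.mulVec, dotProduct, sub_mul, Finset.sum_sub_distrib, N]
    rw [h1]
    have h2 : 0 < (1 - |a i|) * u i := mul_pos (by linarith [ha' i]) hi
    nlinarith [hineq i, hNu i]
  have hx : Tendsto x atTop (𝓝 0) := by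
    rw [tendsto_pi_nhds]
    intro i
    rw [Metric.tendsto_nhds]
    intro ε hε
    filter_upwards [hu i (ε / 2) (by linarith)] with m hm
    rw [Pi.zero_apply, Real.dist_eq, sub_zero]
    rw [hzero, Pi.zero_apply] at hm
    linarith
  simpa using hx.norm
end

section
/- Consider the autonomous model (2) with I_i = 0 for all i and kernels satisfying ∑_{l=0}^∞ |ζ_{ijl}| = 1 for all i,j. If the activation functions satisfy hypothesis (H6*) and the matrix M is a singular irreducible M-matrix, then the zero solution is globally attractive: every solution x : ℤ → ℝⁿ of model (2) with initial time σ ∈ ℕ and bounded initial condition satisfies |x(m)| → 0 as m → ∞. (Corollary 3.1, item ii.) -/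
/-- A real square matrix is reducible if `n = 1` and `A = 0`, or if some simultaneous
permutation of rows and columns puts it in block lower triangular form; equivalently,
there is a nonempty proper subset `S` of indices with `A i j = 0` whenever
`i ∈ S` and `j ∉ S`. -/
def IsReducible {n : ℕ} (A : Matrix (Fin n) (Fin n) ℝ) : Prop :=
  (n = 1 ∧ A = 0) ∨
  ∃ S : Finset (Fin n), S.Nonempty ∧ S ≠ Finset.univ ∧ ∀ i ∈ S, ∀ j ∉ S, A i j = 0

section Auxiliary

open Filter Topology

/-! ### Positive vectors for irreducible M-matrices -/

/-- The coefficient of `t ^ k` in `det (1 + t A)` is the sum of the principal minors of order `k`,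
so all coefficients are nonnegative and the constant one is `1`. -/
theorem det_add_smul_one_pos {n : ℕ} {A : Matrix (Fin n) (Fin n) ℝ} (hA : IsMMatrix A)
    {ε : ℝ} (hε : 0 < ε) : 0 < (A + ε • (1 : Matrix (Fin n) (Fin n) ℝ)).det := by
  have key : ∀ t : ℝ, 0 ≤ t → 0 < (1 + t • A).det := by
    intro t ht
    set q : Polynomial ℝ := (1 + (Polynomial.X : Polynomial ℝ) • A.map Polynomial.C).det with hq
    have hcoeff : ∀ k, 0 ≤ q.coeff k := by
      intro k
      rw [hq, Matrix.coeff_det_one_add_X_smul_eq_sum_minors]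
      exact Finset.sum_nonneg fun s _ => hA.2 s
    have hzero : q.coeff 0 = 1 := by
      rw [hq, Matrix.coeff_det_one_add_X_smul_eq_sum_minors]
      simp
    have heval : q.eval t = (1 + t • A).det := by
      rw [← Polynomial.coe_evalRingHom, hq, RingHom.map_det]
      congr 1
      ext i j
      simp [Matrix.one_apply, apply_ite (Polynomial.eval t)]
      ring
    rw [← heval, Polynomial.eval_eq_sum_range]
    have := Finset.single_le_sum (f := fun k => q.coeff k * t ^ k)
      (fun k _ => mul_nonneg (hcoeff k) (pow_nonneg ht k))
      (Finset.mem_range.2 (Nat.succ_pos q.natDegree))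
    simp only [hzero, pow_zero, mul_one] at this
    linarith
  have hfac : A + ε • (1 : Matrix (Fin n) (Fin n) ℝ) = ε • (1 + ε⁻¹ • A) := by
    rw [smul_add, smul_smul, mul_inv_cancel₀ hε.ne', one_smul, add_comm]
  rw [hfac, Matrix.det_smul]
  exact mul_pos (pow_pos hε _) (key _ (inv_nonneg.2 hε.le))

/-- Minimum principle: at an index where `u` is minimal, the nonpositive off-diagonal entries
bound `(A + ε) u` by the row sum times the minimum. -/
theorem mulVec_shift_le_of_forall_ge {n : ℕ} {A : Matrix (Fin n) (Fin n) ℝ} (hA : IsMMatrix A)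
    (ε : ℝ) (u : Fin n → ℝ) (i : Fin n) (hi : ∀ j, u i ≤ u j) :
    ((A + ε • (1 : Matrix (Fin n) (Fin n) ℝ)).mulVec u) i ≤ ((∑ j, A i j) + ε) * u i := by
  have h : ((A + ε • (1 : Matrix (Fin n) (Fin n) ℝ)).mulVec u) i
      = (∑ j, A i j * u j) + ε * u i := by
    rw [Matrix.add_mulVec, Matrix.smul_mulVec, Matrix.one_mulVec]
    simp [Matrix.mulVec, dotProduct]
  rw [h, add_mul, Finset.sum_mul]
  refine add_le_add (Finset.sum_le_sum fun j _ => ?_) le_rfl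
  by_cases hij : i = j
  · rw [hij]
  · exact mul_le_mul_of_nonpos_left (hi j) (hA.1 i j hij)

/-- The vector is `u ε = adj (A + ε) 1`, which satisfies `(A + ε) u = det (A + ε) 1 > 0`. By the
minimum principle its smallest entry never vanishes for `ε > 0` and is positive for large `ε`,
hence is positive for all `ε > 0` by the intermediate value theorem. -/
theorem exists_pos_mulVec_shift_nonneg {n : ℕ} (hn : 1 ≤ n) {A : Matrix (Fin n) (Fin n) ℝ}
    (hA : IsMMatrix A) {ε : ℝ} (hε : 0 < ε) :
    ∃ u : Fin n → ℝ, (∀ i, 0 < u i) ∧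
      ∀ i, 0 ≤ ((A + ε • (1 : Matrix (Fin n) (Fin n) ℝ)).mulVec u) i := by
  have hne : (Finset.univ : Finset (Fin n)).Nonempty := ⟨⟨0, hn⟩, Finset.mem_univ _⟩
  set B : ℝ → Matrix (Fin n) (Fin n) ℝ := fun t => A + t • (1 : Matrix (Fin n) (Fin n) ℝ) with hB
  set u : ℝ → Fin n → ℝ := fun t => (B t).adjugate.mulVec 1 with hu
  have hBc : Continuous B := by fun_prop
  have huc : Continuous u := hBc.matrix_adjugate.matrix_mulVec continuous_const
  have hBu : ∀ t i, ((B t).mulVec (u t)) i = (B t).det := by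
    intro t i
    simp [hu, Matrix.mulVec_mulVec, Matrix.mul_adjugate, Matrix.smul_mulVec]
  set φ : ℝ → ℝ := fun t => Finset.univ.inf' hne (fun i => u t i) with hφ
  have hφc : Continuous φ :=
    Continuous.finset_inf'_apply hne fun i _ => (continuous_apply i).comp huc
  have harg : ∀ t, ∃ i, φ t = u t i ∧ ∀ j, u t i ≤ u t j := by
    intro t
    obtain ⟨i, _, hi⟩ := Finset.exists_mem_eq_inf' hne (fun i => u t i)
    exact ⟨i, hi, fun j => hi ▸ Finset.inf'_le _ (Finset.mem_univ j)⟩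
  have hdet : ∀ t, 0 < t → ∃ i, 0 < ((∑ j, A i j) + t) * φ t := by
    intro t ht
    obtain ⟨i, hi, hmin⟩ := harg t
    refine ⟨i, ?_⟩
    have h1 := mulVec_shift_le_of_forall_ge hA t (u t) i hmin
    have h2 := hBu t i
    have h3 := det_add_smul_one_pos hA ht
    rw [hi]
    simp only [hB] at h2
    linarith
  -- beyond every row sum in absolute value the minimum is positive
  set E : ℝ := ε + ∑ i, |∑ j, A i j| with hE
  have hEε : ε ≤ E := by
    have : 0 ≤ ∑ i, |∑ j, A i j| := Finset.sum_nonneg fun i _ => abs_nonneg _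
    linarith
  have hφE : 0 < φ E := by
    obtain ⟨i, hi⟩ := hdet E (hε.trans_le hEε)
    refine pos_of_mul_pos_right hi ?_
    have h1 : |∑ j, A i j| ≤ ∑ i, |∑ j, A i j| :=
      Finset.single_le_sum (f := fun i => |∑ j, A i j|) (fun i _ => abs_nonneg _)
        (Finset.mem_univ i)
    have h2 := neg_abs_le (∑ j, A i j)
    linarith
  have hφε : 0 < φ ε := by
    by_contra! hcon
    obtain ⟨t, ht, ht0⟩ := intermediate_value_Icc hEε hφc.continuousOn ⟨hcon, hφE.le⟩
    obtain ⟨i, hi⟩ := hdet t (hε.trans_le ht.1)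
    rw [ht0, mul_zero] at hi
    exact lt_irrefl _ hi
  refine ⟨u ε, fun i => hφε.trans_le (Finset.inf'_le _ (Finset.mem_univ i)), fun i => ?_⟩
  have h2 := hBu ε i
  have h3 := det_add_smul_one_pos hA hε
  simp only [hB] at h2
  rw [h2]
  exact h3.le

/-- Normalise the vectors for `A + 1 / (k + 1)` to the standard simplex and pass to a limit.
Irreducibility upgrades the nonnegative limit to a positive one. -/
theorem exists_pos_mulVec_nonneg {n : ℕ} (hn : 1 ≤ n) {A : Matrix (Fin n) (Fin n) ℝ}
    (hA : IsMMatrix A) (hirr : ¬ IsReducible A) :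
    ∃ d : Fin n → ℝ, (∀ i, 0 < d i) ∧ ∀ i, 0 ≤ A.mulVec d i := by
  have hne : (Finset.univ : Finset (Fin n)).Nonempty := ⟨⟨0, hn⟩, Finset.mem_univ _⟩
  have hstep : ∀ k : ℕ, ∃ w ∈ stdSimplex ℝ (Fin n),
      ∀ i, 0 ≤ ((A + (1 / ((k : ℝ) + 1)) • (1 : Matrix (Fin n) (Fin n) ℝ)).mulVec w) i := by
    intro k
    obtain ⟨u, hu, hAu⟩ := exists_pos_mulVec_shift_nonneg hn hA (Nat.one_div_pos_of_nat (n := k))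
    have hS : 0 < ∑ i, u i := Finset.sum_pos (fun i _ => hu i) hne
    refine ⟨(∑ i, u i)⁻¹ • u, ⟨fun i => ?_, ?_⟩, fun i => ?_⟩
    · exact mul_nonneg (inv_nonneg.2 hS.le) (hu i).le
    · simp only [Pi.smul_apply, smul_eq_mul, ← Finset.mul_sum]
      exact inv_mul_cancel₀ hS.ne'
    · rw [Matrix.mulVec_smul]
      exact mul_nonneg (inv_nonneg.2 hS.le) (hAu i)
  choose w hw hAw using hstep
  obtain ⟨d, hd, ψ, hψ, hlim⟩ := (isCompact_stdSimplex ℝ (Fin n)).tendsto_subseq hw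
  have hε : Tendsto (fun k : ℕ => 1 / (((ψ k : ℕ) : ℝ) + 1)) atTop (𝓝 0) :=
    tendsto_one_div_add_atTop_nhds_zero_nat.comp hψ.tendsto_atTop
  have hAd : ∀ i, 0 ≤ A.mulVec d i := by
    intro i
    have hc : Continuous fun z : ℝ × (Fin n → ℝ) =>
        ((A + z.1 • (1 : Matrix (Fin n) (Fin n) ℝ)).mulVec z.2) i := by
      refine (continuous_apply i).comp (Continuous.matrix_mulVec ?_ continuous_snd)
      fun_prop
    have h := (hc.tendsto (0, d)).comp (hε.prodMk_nhds hlim)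
    have h2 := ge_of_tendsto' h (b := 0) fun k => hAw (ψ k) i
    simpa using h2
  refine ⟨d, ?_, hAd⟩
  -- the zero set of `d` is closed under the adjacency relation of `A`
  set S : Finset (Fin n) := Finset.univ.filter fun i => d i = 0 with hS
  by_contra! hcon
  obtain ⟨i₀, hi₀⟩ := hcon
  refine hirr (Or.inr ⟨S, ⟨i₀, ?_⟩, ?_, ?_⟩)
  · simpa [hS] using le_antisymm hi₀ (hd.1 i₀)
  · intro hSu
    have hz : ∀ i, d i = 0 := fun i => by
      have : i ∈ S := hSu ▸ Finset.mem_univ i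
      simpa [hS] using this
    have := hd.2
    simp [hz] at this
  · intro i hi j hj
    have hdi : d i = 0 := by simpa [hS] using hi
    have hdj : d j ≠ 0 := by simpa [hS] using hj
    have hterm : ∀ k, A i k * d k ≤ 0 := by
      intro k
      by_cases hik : i = k
      · rw [← hik, hdi, mul_zero]
      · exact mul_nonpos_of_nonpos_of_nonneg (hA.1 i k hik) (hd.1 k)
    have hsum : ∑ k, A i k * d k = 0 :=
      le_antisymm (Finset.sum_nonpos fun k _ => hterm k) (hAd i)
    have := (Finset.sum_eq_zero_iff_of_nonpos fun k _ => hterm k).1 hsum j (Finset.mem_univ j)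
    exact (mul_eq_zero.1 this).resolve_right hdj

/-! ### Uniform gaps and delayed averages -/

/-- The bound at `u = 0` follows from the strict bounds elsewhere by continuity. -/
theorem abs_le_mul_abs {h : ℝ → ℝ} {H : ℝ} (hc : Continuous h)
    (hlt : ∀ u : ℝ, u ≠ 0 → |h u| < H * |u|) (u : ℝ) : |h u| ≤ H * |u| := by
  have hclosed : IsClosed {u : ℝ | |h u| ≤ H * |u|} :=
    isClosed_le hc.abs (continuous_const.mul continuous_abs)
  have hdense : Dense ({0}ᶜ : Set ℝ) := dense_compl_singleton 0
  exact hclosed.closure_subset_iff.2 (fun v hv => (hlt v hv).le) (hdense u)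

/-- By compactness, the strict inequality `|h u| < H |u|` has a uniform gap on a slight enlargement
of `[-r, r]`. -/
theorem exists_gap {h : ℝ → ℝ} {H : ℝ} (hc : Continuous h) (hH : 0 < H)
    (hlt : ∀ u : ℝ, u ≠ 0 → |h u| < H * |u|) {r : ℝ} (hr : 0 < r) :
    ∃ δ > 0, ∀ u : ℝ, |u| ≤ r + δ → |h u| ≤ H * r - δ := by
  set ψ : ℝ → ℝ := fun u => max (|u| - r) (H * r - |h u|) with hψ
  have hψc : Continuous ψ := (continuous_abs.sub continuous_const).max (continuous_const.sub hc.abs)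
  have hψpos : ∀ u, 0 < ψ u := by
    intro u
    rw [hψ, lt_max_iff]
    by_cases hu : |u| ≤ r
    · right
      by_cases hu0 : u = 0
      · have h1 := abs_le_mul_abs hc hlt u
        have h2 : 0 < H * r := mul_pos hH hr
        simp only [hu0, abs_zero, mul_zero] at h1 ⊢
        linarith
      · have h1 := hlt u hu0
        have h2 := mul_le_mul_of_nonneg_left hu hH.le
        linarith
    · left
      linarith [not_le.1 hu]
  obtain ⟨u₀, -, hmin⟩ := (isCompact_Icc (a := -(r + 1)) (b := r + 1)).exists_isMinOn
    ⟨0, by constructor <;> linarith⟩ hψc.continuousOn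
  have h0 := hψpos u₀
  refine ⟨min (ψ u₀ / 2) 1, by positivity, fun u hu => ?_⟩
  have h1 := min_le_left (ψ u₀ / 2) 1
  have h2 := min_le_right (ψ u₀ / 2) 1
  have h3 : ψ u₀ ≤ ψ u := hmin (abs_le.1 (by linarith))
  rcases le_max_iff.1 h3 with h4 | h4 <;> linarith

theorem summable_abs_of_tsum_eq_one {ζ : ℕ → ℝ} (h : ∑' l, |ζ l| = 1) :
    Summable fun l => |ζ l| := by
  by_contra hs
  rw [tsum_eq_zero_of_not_summable hs] at h
  exact zero_ne_one h

theorem abs_tsum_le {ζ v : ℕ → ℝ} {q : ℝ} (h : ∑' l, |ζ l| = 1) (hv : ∀ l, |v l| ≤ q) :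
    |∑' l, ζ l * v l| ≤ q := by
  have hs := (summable_abs_of_tsum_eq_one h).hasSum
  rw [h] at hs
  have := tsum_of_norm_bounded (hs.mul_right q) (f := fun l => ζ l * v l) fun l => by
    rw [Real.norm_eq_abs, abs_mul]
    exact mul_le_mul_of_nonneg_left (hv l) (abs_nonneg _)
  simpa using this

theorem tendsto_sub_const (k : ℤ) : Tendsto (fun m : ℤ => m - k) atTop atTop :=
  tendsto_atTop_add_const_right _ (-k) tendsto_id

/-- Averaging against a kernel of total mass one does not increase the eventual bound: the part
of `|v|` exceeding `q` has vanishing average, by dominated convergence. -/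
theorem eventually_abs_tsum_le {ζ : ℕ → ℝ} {v : ℤ → ℝ} {q C ε : ℝ} (h : ∑' l, |ζ l| = 1)
    (hC : ∀ m, |v m| ≤ C) (hq : ∀ᶠ m in atTop, |v m| ≤ q) (hε : 0 < ε) :
    ∀ᶠ m : ℤ in atTop, |∑' l : ℕ, ζ l * v (m - l)| ≤ q + ε := by
  have hs := summable_abs_of_tsum_eq_one h
  have hC0 : 0 ≤ C := (abs_nonneg _).trans (hC 0)
  have hq0 : 0 ≤ q := by
    obtain ⟨m, hm⟩ := hq.exists
    exact (abs_nonneg _).trans hm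
  set e : ℤ → ℝ := fun m => max (|v m| - q) 0 with he
  have he0 : ∀ m, 0 ≤ e m := fun m => le_max_right _ _
  have heC : ∀ m, e m ≤ C := fun m => max_le (by linarith [hC m]) hC0
  have hbd : ∀ (m : ℤ) (l : ℕ), ‖|ζ l| * e (m - l)‖ ≤ |ζ l| * C := by
    intro m l
    rw [Real.norm_of_nonneg (mul_nonneg (abs_nonneg _) (he0 _))]
    exact mul_le_mul_of_nonneg_left (heC _) (abs_nonneg _)
  have hlim : Tendsto (fun m : ℤ => ∑' l : ℕ, |ζ l| * e (m - l)) atTop (𝓝 (∑' _ : ℕ, (0 : ℝ))) := by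
    refine tendsto_tsum_of_dominated_convergence (hs.mul_right C) (fun l => ?_)
      (Eventually.of_forall hbd)
    refine tendsto_const_nhds.congr' ?_
    filter_upwards [(tendsto_sub_const l).eventually hq] with m hm
    rw [he]
    simp only
    rw [max_eq_right (by linarith), mul_zero]
  rw [tsum_zero] at hlim
  filter_upwards [hlim.eventually_lt_const hε] with m hm
  have hse : Summable fun l : ℕ => |ζ l| * e (m - l) :=
    Summable.of_norm_bounded (hs.mul_right C) (hbd m)
  have hsum : HasSum (fun l : ℕ => |ζ l| * q + |ζ l| * e (m - l))
      (1 * q + ∑' l : ℕ, |ζ l| * e (m - l)) := by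
    have := hs.hasSum
    rw [h] at this
    exact (this.mul_right q).add hse.hasSum
  have := tsum_of_norm_bounded hsum (f := fun l : ℕ => ζ l * v (m - l)) fun l => by
    rw [Real.norm_eq_abs, abs_mul, ← mul_add]
    refine mul_le_mul_of_nonneg_left ?_ (abs_nonneg _)
    have := le_max_left (|v (m - l)| - q) 0
    simp only [he]
    linarith
  rw [Real.norm_eq_abs] at this
  linarith

/-! ### Dynamics in the weighted norm -/

/-- If `s > 0` is an asymptotic bound for the solution in the norm weighted by `d`, then so is some
`s' < s`. -/
theorem contraction {n P : ℕ} (hn : 1 ≤ n) {a : Fin n → ℝ} (ha : ∀ i, -1 < a i ∧ a i < 1)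
    {ν : Fin n → ℕ} {τ : Fin n → Fin n → Fin P → ℕ}
    {b : Fin n → Fin n → Fin P → ℝ} {c : Fin n → Fin n → ℝ} {ζ : Fin n → Fin n → ℕ → ℝ}
    {f : Fin n → Fin n → Fin P → ℝ → ℝ} {g : Fin n → Fin n → ℝ → ℝ}
    {F : Fin n → Fin n → Fin P → ℝ} {G : Fin n → Fin n → ℝ} {σ : ℤ} {x : ℤ → Fin n → ℝ}
    (hmodel : ∀ m : ℤ, σ ≤ m → ∀ i : Fin n,
      x (m + 1) i = a i * x (m - ν i) i
        + ∑ j, ∑ p, b i j p * f i j p (x (m - τ i j p) j)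
        + ∑ j, c i j * ∑' l : ℕ, ζ i j l * g i j (x (m - l) j))
    (hζ : ∀ i j, ∑' l : ℕ, |ζ i j l| = 1)
    (hf : ∀ i j p, Continuous (f i j p) ∧ 0 < F i j p ∧
      ∀ u : ℝ, u ≠ 0 → |f i j p u| < F i j p * |u|)
    (hg : ∀ i j, Continuous (g i j) ∧ 0 < G i j ∧
      ∀ u : ℝ, u ≠ 0 → |g i j u| < G i j * |u|)
    {d : Fin n → ℝ} (hd : ∀ i, 0 < d i)
    (hrow : ∀ i, |a i| * d i + ∑ j, (|c i j| * G i j + ∑ p, |b i j p| * F i j p) * d j ≤ d i)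
    {K : ℝ} (hK : ∀ m j, |x m j| ≤ K * d j)
    {s : ℝ} (hs : 0 < s) (hsup : ∀ ε > 0, ∀ᶠ m in atTop, ∀ j, |x m j| ≤ (s + ε) * d j) :
    ∃ s' < s, ∀ᶠ m in atTop, ∀ j, |x m j| ≤ s' * d j := by
  have hsup' : ∀ j, ∀ δ > 0, ∀ᶠ m in atTop, |x m j| ≤ s * d j + δ := by
    intro j δ hδ
    filter_upwards [hsup (δ / d j) (div_pos hδ (hd j))] with m hm
    have := hm j
    rwa [add_mul, div_mul_cancel₀ _ (hd j).ne'] at this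
  have hrow' : ∀ i, ∃ T < s * d i, ∀ᶠ m : ℤ in atTop, |x m i| ≤ T := by
    intro i
    have hF : ∀ j p, ∃ t, t ≤ |b i j p| * F i j p * (s * d j) ∧
        (b i j p ≠ 0 → t < |b i j p| * F i j p * (s * d j)) ∧
        ∀ᶠ m : ℤ in atTop, |b i j p * f i j p (x (m - τ i j p) j)| ≤ t := by
      intro j p
      obtain ⟨δ, hδ, hgap⟩ := exists_gap (hf i j p).1 (hf i j p).2.1 (hf i j p).2.2
        (mul_pos hs (hd j))
      refine ⟨|b i j p| * (F i j p * (s * d j) - δ), ?_, fun hb => ?_, ?_⟩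
      · have := mul_nonneg (abs_nonneg (b i j p)) hδ.le
        linarith
      · have := mul_pos (abs_pos.2 hb) hδ
        linarith
      · filter_upwards [(tendsto_sub_const (τ i j p)).eventually (hsup' j δ hδ)] with m hm
        rw [abs_mul]
        exact mul_le_mul_of_nonneg_left (hgap _ hm) (abs_nonneg _)
    have hG : ∀ j, ∃ w, w ≤ |c i j| * G i j * (s * d j) ∧
        (c i j ≠ 0 → w < |c i j| * G i j * (s * d j)) ∧
        ∀ᶠ m : ℤ in atTop, |c i j * ∑' l : ℕ, ζ i j l * g i j (x (m - l) j)| ≤ w := by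
      intro j
      obtain ⟨δ, hδ, hgap⟩ := exists_gap (hg i j).1 (hg i j).2.1 (hg i j).2.2
        (mul_pos hs (hd j))
      refine ⟨|c i j| * (G i j * (s * d j) - δ + δ / 2), ?_, fun hb => ?_, ?_⟩
      · have := mul_nonneg (abs_nonneg (c i j)) hδ.le
        linarith
      · have := mul_pos (abs_pos.2 hb) hδ
        linarith
      · have hbdd : ∀ m, |g i j (x m j)| ≤ G i j * (K * d j) := fun m =>
          (abs_le_mul_abs (hg i j).1 (hg i j).2.2 _).trans
            (mul_le_mul_of_nonneg_left (hK m j) (hg i j).2.1.le)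
        have hev : ∀ᶠ m in atTop, |g i j (x m j)| ≤ G i j * (s * d j) - δ :=
          (hsup' j δ hδ).mono fun m hm => hgap _ hm
        filter_upwards [eventually_abs_tsum_le (v := fun m => g i j (x m j)) (hζ i j) hbdd hev
          (half_pos hδ)] with m hm
        rw [abs_mul]
        exact mul_le_mul_of_nonneg_left hm (abs_nonneg _)
    choose t ht1 ht2 ht3 using hF
    choose w hw1 hw2 hw3 using hG
    set W : Fin n → ℝ := fun j => ∑ p, t j p + w j with hW
    set N : Fin n → ℝ := fun j => |c i j| * G i j + ∑ p, |b i j p| * F i j p with hN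
    have hNW : ∀ j, N j * (s * d j)
        = ∑ p, |b i j p| * F i j p * (s * d j) + |c i j| * G i j * (s * d j) := by
      intro j
      rw [hN]
      simp only
      rw [add_mul, Finset.sum_mul, add_comm]
    have hWle : ∀ j, W j ≤ N j * (s * d j) := by
      intro j
      rw [hNW]
      exact add_le_add (Finset.sum_le_sum fun p _ => ht1 j p) (hw1 j)
    have hrs : |a i| * (s * d i) + ∑ j, N j * (s * d j) ≤ s * d i := by
      have := mul_le_mul_of_nonneg_left (hrow i) hs.le
      rw [mul_add, Finset.mul_sum] at this
      refine le_trans (le_of_eq (congrArg₂ (· + ·) ?_ ?_)) this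
      · ring
      · exact Finset.sum_congr rfl fun j _ => by ring
    have hai : |a i| < 1 := abs_lt.2 (ha i)
    have hsd : 0 < s * d i := mul_pos hs (hd i)
    have hstrict : |a i| * (s * d i) + ∑ j, W j < s * d i := by
      by_cases hz : ∃ j, W j < N j * (s * d j)
      · obtain ⟨j, hj⟩ := hz
        have := Finset.sum_lt_sum (fun j _ => hWle j) ⟨j, Finset.mem_univ j, hj⟩
        linarith
      · -- all coupling coefficients of the row vanish, so `|a i| < 1` gives the strictness
        push Not at hz
        have hc0 : ∀ j, c i j = 0 := by
          intro j
          by_contra hc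
          have := add_lt_add_of_le_of_lt
            (Finset.sum_le_sum (s := Finset.univ) fun p _ => ht1 j p) (hw2 j hc)
          rw [← hNW] at this
          exact absurd (hz j) (not_le.2 this)
        have hb0 : ∀ j p, b i j p = 0 := by
          intro j p
          by_contra hb
          have := add_lt_add_of_lt_of_le (Finset.sum_lt_sum (s := Finset.univ)
            (fun p _ => ht1 j p) ⟨p, Finset.mem_univ p, ht2 j p hb⟩) (hw1 j)
          rw [← hNW] at this
          exact absurd (hz j) (not_le.2 this)
        have hN0 : ∀ j, N j = 0 := fun j => by simp [hN, hc0, hb0]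
        have hle : ∑ j, W j ≤ 0 := Finset.sum_nonpos fun j _ => by
          simpa [hN0] using hWle j
        have := mul_lt_mul_of_pos_right hai hsd
        linarith
    set γ : ℝ := s * d i - (|a i| * (s * d i) + ∑ j, W j) with hγ
    have hγ0 : 0 < γ := by linarith
    refine ⟨|a i| * (s * d i + γ / 2) + ∑ j, W j, ?_, ?_⟩
    · have := mul_le_mul_of_nonneg_right hai.le (half_pos hγ0).le
      linarith
    · have hev : ∀ᶠ m : ℤ in atTop, |x (m + 1) i| ≤ |a i| * (s * d i + γ / 2) + ∑ j, W j := by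
        filter_upwards [eventually_ge_atTop σ,
          (tendsto_sub_const (ν i)).eventually (hsup' i (γ / 2) (half_pos hγ0)),
          eventually_all.2 fun j => eventually_all.2 fun p => ht3 j p,
          eventually_all.2 fun j => hw3 j] with m hm h1 h2 h3
        rw [hmodel m hm i, add_assoc, ← Finset.sum_add_distrib]
        refine (abs_add_le _ _).trans (add_le_add ?_ ?_)
        · rw [abs_mul]
          exact mul_le_mul_of_nonneg_left h1 (abs_nonneg _)
        · refine (Finset.abs_sum_le_sum_abs _ _).trans (Finset.sum_le_sum fun j _ => ?_)
          refine (abs_add_le _ _).trans (add_le_add ?_ (h3 j))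
          exact (Finset.abs_sum_le_sum_abs _ _).trans (Finset.sum_le_sum fun p _ => h2 j p)
      filter_upwards [(tendsto_sub_const 1).eventually hev] with m hm
      simpa using hm
  choose T hT1 hT2 using hrow'
  have hne : (Finset.univ : Finset (Fin n)).Nonempty := ⟨⟨0, hn⟩, Finset.mem_univ _⟩
  refine ⟨Finset.univ.sup' hne fun i => T i / d i, ?_, ?_⟩
  · rw [Finset.sup'_lt_iff]
    exact fun i _ => (div_lt_iff₀ (hd i)).2 (hT1 i)
  · filter_upwards [eventually_all.2 hT2] with m hm j
    refine (hm j).trans ?_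
    rw [← div_le_iff₀ (hd j)]
    exact Finset.le_sup' (fun i => T i / d i) (Finset.mem_univ j)

/-- The weighted ball determined by the initial condition is invariant. -/
theorem solution_bounded {n P : ℕ} {a : Fin n → ℝ}
    {ν : Fin n → ℕ} {τ : Fin n → Fin n → Fin P → ℕ}
    {b : Fin n → Fin n → Fin P → ℝ} {c : Fin n → Fin n → ℝ} {ζ : Fin n → Fin n → ℕ → ℝ}
    {f : Fin n → Fin n → Fin P → ℝ → ℝ} {g : Fin n → Fin n → ℝ → ℝ}
    {F : Fin n → Fin n → Fin P → ℝ} {G : Fin n → Fin n → ℝ} {σ : ℤ} {x : ℤ → Fin n → ℝ}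
    (hmodel : ∀ m : ℤ, σ ≤ m → ∀ i : Fin n,
      x (m + 1) i = a i * x (m - ν i) i
        + ∑ j, ∑ p, b i j p * f i j p (x (m - τ i j p) j)
        + ∑ j, c i j * ∑' l : ℕ, ζ i j l * g i j (x (m - l) j))
    (hζ : ∀ i j, ∑' l : ℕ, |ζ i j l| = 1)
    (hf : ∀ i j p, Continuous (f i j p) ∧ 0 < F i j p ∧
      ∀ u : ℝ, u ≠ 0 → |f i j p u| < F i j p * |u|)
    (hg : ∀ i j, Continuous (g i j) ∧ 0 < G i j ∧
      ∀ u : ℝ, u ≠ 0 → |g i j u| < G i j * |u|)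
    {d : Fin n → ℝ} (hd : ∀ i, 0 < d i)
    (hrow : ∀ i, |a i| * d i + ∑ j, (|c i j| * G i j + ∑ p, |b i j p| * F i j p) * d j ≤ d i)
    {B : ℝ} (hB : ∀ m ≤ σ, ∀ j, |x m j| ≤ B) :
    ∃ K, 0 ≤ K ∧ ∀ m j, |x m j| ≤ K * d j := by
  have hpos : ∀ j, 0 ≤ |B| / d j := fun j => div_nonneg (abs_nonneg _) (hd j).le
  set K : ℝ := ∑ j, |B| / d j with hKdef
  have hK0 : 0 ≤ K := Finset.sum_nonneg fun j _ => hpos j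
  have hBK : ∀ j, |B| / d j ≤ K := fun j =>
    Finset.single_le_sum (f := fun j => |B| / d j) (fun j _ => hpos j) (Finset.mem_univ j)
  clear_value K
  refine ⟨K, hK0, ?_⟩
  have hind : ∀ N : ℕ, ∀ m ≤ σ + N, ∀ j, |x m j| ≤ K * d j := by
    intro N
    induction N with
    | zero =>
      intro m hm j
      have h1 := hB m (by simpa using hm) j
      have h2 := hBK j
      rw [div_le_iff₀ (hd j)] at h2
      exact h1.trans ((le_abs_self B).trans h2)
    | succ N ih =>
      intro m hm i
      rcases lt_or_eq_of_le hm with hlt | heq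
      · exact ih m (by push_cast at hlt; omega) i
      · have heq' : m = (σ + N) + 1 := by push_cast at heq; omega
        have hpast : ∀ (k : ℕ) j, |x (σ + N - k) j| ≤ K * d j := fun k j => ih _ (by omega) j
        have hrK : |a i| * (K * d i)
            + ∑ j, (∑ p, |b i j p| * (F i j p * (K * d j)) + |c i j| * (G i j * (K * d j)))
            ≤ K * d i := by
          have := mul_le_mul_of_nonneg_left (hrow i) hK0
          rw [mul_add, Finset.mul_sum] at this
          refine le_trans (le_of_eq (congrArg₂ (· + ·) ?_ ?_)) this
          · ring
          · refine Finset.sum_congr rfl fun j _ => ?_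
            rw [add_mul, mul_add, Finset.sum_mul, Finset.mul_sum, add_comm]
            congr 1
            · ring
            · exact Finset.sum_congr rfl fun p _ => by ring
        rw [heq', hmodel _ (by omega) i, add_assoc, ← Finset.sum_add_distrib]
        refine le_trans ((abs_add_le _ _).trans (add_le_add ?_ ?_)) hrK
        · rw [abs_mul]
          exact mul_le_mul_of_nonneg_left (hpast _ i) (abs_nonneg _)
        · refine (Finset.abs_sum_le_sum_abs _ _).trans (Finset.sum_le_sum fun j _ => ?_)
          refine (abs_add_le _ _).trans (add_le_add ?_ ?_)
          · refine (Finset.abs_sum_le_sum_abs _ _).trans (Finset.sum_le_sum fun p _ => ?_)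
            rw [abs_mul]
            exact mul_le_mul_of_nonneg_left
              ((abs_le_mul_abs (hf i j p).1 (hf i j p).2.2 _).trans
                (mul_le_mul_of_nonneg_left (hpast _ j) (hf i j p).2.1.le)) (abs_nonneg _)
          · rw [abs_mul]
            refine mul_le_mul_of_nonneg_left (abs_tsum_le (hζ i j) fun l => ?_) (abs_nonneg _)
            exact (abs_le_mul_abs (hg i j).1 (hg i j).2.2 _).trans
              (mul_le_mul_of_nonneg_left (hpast _ j) (hg i j).2.1.le)
  intro m j
  exact hind (m - σ).toNat m (by omega) j

end Auxiliary

/-- Corollary 3.1, item ii: for the autonomous model (2) with zero inputs, kernels with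
`∑ |ζ| = 1`, activation functions satisfying (H6*), and `M` a singular irreducible
M-matrix, the zero solution is globally attractive. -/
theorem autonomous_global_attractivity_H6star
    (n P : ℕ) (hn : 1 ≤ n) (hP : 1 ≤ P)
    (a : Fin n → ℝ) (ha : ∀ i, -1 < a i ∧ a i < 1)
    (ν : Fin n → ℕ) (τ : Fin n → Fin n → Fin P → ℕ)
    (b : Fin n → Fin n → Fin P → ℝ) (c : Fin n → Fin n → ℝ)
    (I : Fin n → ℝ)
    (ζ : Fin n → Fin n → ℕ → ℝ)
    (f : Fin n → Fin n → Fin P → ℝ → ℝ)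
    (g : Fin n → Fin n → ℝ → ℝ)
    (F : Fin n → Fin n → Fin P → ℝ)
    (G : Fin n → Fin n → ℝ)
    (σ : ℕ) (x : ℤ → Fin n → ℝ)
    -- `x` has bounded initial condition: it is bounded on `(-∞, σ] ∩ ℤ`
    (hinit : ∃ B : ℝ, ∀ m : ℤ, m ≤ (σ : ℤ) → ‖x m‖ ≤ B)
    -- the inner series converge absolutely
    (habs : ∀ (i j : Fin n) (m : ℤ), Summable fun l : ℕ => |ζ i j l * g i j (x (m - l) j)|)
    -- `x` is a solution of the autonomous model (2) from the initial time `σ` on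
    (hmodel : ∀ m : ℕ, σ ≤ m → ∀ i : Fin n,
      x ((m : ℤ) + 1) i =
        a i * x ((m : ℤ) - ν i) i
        + ∑ j, ∑ p, b i j p * f i j p (x ((m : ℤ) - τ i j p) j)
        + ∑ j, c i j * ∑' l : ℕ, ζ i j l * g i j (x ((m : ℤ) - l) j)
        + I i)
    -- (H4): the kernels satisfy `∑ l, |ζ i j l| = 1`
    (hH4 : ∀ i j, ∑' l : ℕ, |ζ i j l| = 1)
    -- zero external inputs
    (hI : ∀ i, I i = 0)
    -- (H6*)
    (hH6f : ∀ i j p, Continuous (f i j p) ∧ 0 < F i j p ∧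
      ∀ u : ℝ, u ≠ 0 → |f i j p u| < F i j p * |u|)
    (hH6g : ∀ i j, Continuous (g i j) ∧ 0 < G i j ∧
      ∀ u : ℝ, u ≠ 0 → |g i j u| < G i j * |u|)
    -- the matrix `M` is a singular irreducible M-matrix
    (hM : IsMMatrix (Matrix.of fun i j : Fin n =>
        (if i = j then 1 - |a i| else 0)
        - (|c i j| * G i j + ∑ p, |b i j p| * F i j p)))
    (hMsing : ((Matrix.of fun i j : Fin n =>
        (if i = j then 1 - |a i| else 0)
        - (|c i j| * G i j + ∑ p, |b i j p| * F i j p))).det = 0)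
    (hMirr : ¬ IsReducible (Matrix.of fun i j : Fin n =>
        (if i = j then 1 - |a i| else 0)
        - (|c i j| * G i j + ∑ p, |b i j p| * F i j p))) :
    Filter.Tendsto (fun m : ℤ => ‖x m‖) Filter.atTop (nhds 0) := by
  have hmodel' : ∀ m : ℤ, (σ : ℤ) ≤ m → ∀ i : Fin n,
      x (m + 1) i = a i * x (m - ν i) i
        + ∑ j, ∑ p, b i j p * f i j p (x (m - τ i j p) j)
        + ∑ j, c i j * ∑' l : ℕ, ζ i j l * g i j (x (m - l) j) := by
    intro m hm i
    obtain ⟨k, rfl⟩ := Int.eq_ofNat_of_zero_le (le_trans (Int.natCast_nonneg σ) hm)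
    have := hmodel k (by exact_mod_cast hm) i
    rwa [hI i, add_zero] at this
  obtain ⟨d, hd, hMd⟩ := exists_pos_mulVec_nonneg hn hM hMirr
  have hrow : ∀ i, |a i| * d i
      + ∑ j, (|c i j| * G i j + ∑ p, |b i j p| * F i j p) * d j ≤ d i := by
    intro i
    have h := hMd i
    simp only [Matrix.mulVec, dotProduct, Matrix.of_apply, sub_mul, ite_mul, zero_mul,
      Finset.sum_sub_distrib, Finset.sum_ite_eq, Finset.mem_univ, if_true] at h
    linarith
  obtain ⟨B, hB⟩ := hinit
  obtain ⟨K, hK0, hK⟩ := solution_bounded hmodel' hH4 hH6f hH6g hd hrow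
    (fun m hm j => (norm_le_pi_norm (x m) j).trans (hB m hm))
  -- `S` is the set of asymptotic bounds of the solution in the weighted norm
  set S : Set ℝ := {k | 0 ≤ k ∧ ∀ᶠ m in Filter.atTop, ∀ j, |x m j| ≤ k * d j} with hS
  have hSne : S.Nonempty := ⟨K, hK0, Filter.Eventually.of_forall hK⟩
  have hSbdd : BddBelow S := ⟨0, fun k hk => hk.1⟩
  have hnear : ∀ ε > 0, ∀ᶠ m in Filter.atTop, ∀ j, |x m j| ≤ (sInf S + ε) * d j := by
    intro ε hε
    obtain ⟨k, hk, hkε⟩ := exists_lt_of_csInf_lt hSne (lt_add_of_pos_right (sInf S) hε)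
    filter_upwards [hk.2] with m hm j
    exact (hm j).trans (mul_le_mul_of_nonneg_right hkε.le (hd j).le)
  have hinf : sInf S = 0 := by
    refine le_antisymm ?_ (le_csInf hSne fun k hk => hk.1)
    by_contra! hpos
    obtain ⟨s', hs', hev⟩ := contraction hn ha hmodel' hH4 hH6f hH6g hd hrow hK hpos hnear
    have hmem : max s' 0 ∈ S := by
      refine ⟨le_max_right _ _, ?_⟩
      filter_upwards [hev] with m hm j
      exact (hm j).trans (mul_le_mul_of_nonneg_right (le_max_left _ _) (hd j).le)
    exact absurd (csInf_le hSbdd hmem) (not_le.2 (max_lt hs' hpos))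
  rw [hinf] at hnear
  have hD : 0 ≤ ∑ j, d j := Finset.sum_nonneg fun j _ => (hd j).le
  rw [Metric.tendsto_nhds]
  intro ε hε
  have hη : 0 < ε / (∑ j, d j + 1) := by positivity
  filter_upwards [hnear _ hη] with m hm
  rw [Real.dist_eq, sub_zero, abs_norm]
  refine (pi_norm_lt_iff hε).2 fun j => (hm j).trans_lt ?_
  have hdj : d j ≤ ∑ j, d j := Finset.single_le_sum (fun j _ => (hd j).le) (Finset.mem_univ j)
  rw [zero_add, div_mul_eq_mul_div, div_lt_iff₀ (by positivity)]
  exact mul_lt_mul_of_pos_left (by linarith) hε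
end

section
/- Let n ≥ 1, let a ∈ [0,1), C ≥ 0, σ ∈ ℕ, and let x : ℤ → ℝⁿ be bounded on (−∞,σ] ∩ ℤ with ‖x_σ‖ := sup_{s ≤ 0} |x(σ+s)| (max norm on ℝⁿ). Suppose that for every integer m ≥ σ and every i ∈ {1,…,n} there is some k ∈ ℕ with |x_i(m+1)| ≤ a |x_i(m−k)| + C. Then for every q ≥ 1, ‖x_{σ+q}‖ := sup_{s ≤ 0} |x(σ+q+s)| ≤ ‖x_σ‖ + C (1 − a^q)/(1 − a); in particular x is bounded on ℤ. (Inequality (3.4) in the proof of Lemma 3.1, item i.) -/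
/-!
Put `M = ‖x_σ‖` and `S q = (1 - a ^ q) / (1 - a)`. Induction on `q` shows that `M + C * S q` bounds
`‖x m‖` for all `m ≤ σ + q`: the only new point is `σ + q + 1`, where the recursion, whose
right-hand side looks only at points `≤ σ + q`, gives each coordinate the bound
`a * (M + C * S q) + C = a * M + C * S (q + 1) ≤ M + C * S (q + 1)`.
Since `S q ≤ 1 / (1 - a)`, the bounds are uniform in `q`, so `x` is bounded on `ℤ`.
-/


/-- Inequality (3.4) in the proof of Lemma 3.1, item i: if `x : ℤ → ℝⁿ` is bounded on
`(-∞, σ]` and for every `m ≥ σ` and every `i` there is `k ∈ ℕ` with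
`|xᵢ(m+1)| ≤ a |xᵢ(m-k)| + C`, where `0 ≤ a < 1` and `C ≥ 0`, then
`‖x_{σ+q}‖ ≤ ‖x_σ‖ + C (1 - a^q)/(1 - a)` for every `q ≥ 1`; in particular `x` is
bounded on `ℤ`. Here `‖x_m‖ = sup_{s ≤ 0} ‖x (m + s)‖` (max norm on `ℝⁿ`). -/
theorem segment_norm_bound
    (n : ℕ) (hn : 1 ≤ n) (a C : ℝ) (ha0 : 0 ≤ a) (ha1 : a < 1) (hC : 0 ≤ C)
    (σ : ℕ) (x : ℤ → Fin n → ℝ)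
    -- `x` is bounded on `(-∞, σ] ∩ ℤ`
    (hbdd : BddAbove (Set.range fun s : {s : ℤ // s ≤ 0} => ‖x ((σ : ℤ) + s)‖))
    (hrec : ∀ m : ℤ, (σ : ℤ) ≤ m → ∀ i : Fin n, ∃ k : ℕ,
      |x (m + 1) i| ≤ a * |x (m - (k : ℤ)) i| + C) :
    (∀ q : ℕ, 1 ≤ q → ∀ s : ℤ, s ≤ 0 →
      ‖x ((σ : ℤ) + (q : ℤ) + s)‖ ≤
        (⨆ s : {s : ℤ // s ≤ 0}, ‖x ((σ : ℤ) + s)‖) + C * (1 - a ^ q) / (1 - a))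
    ∧ ∃ B : ℝ, ∀ m : ℤ, ‖x m‖ ≤ B := by
  have h1a : 0 < 1 - a := by linarith
  set M : ℝ := ⨆ s : {s : ℤ // s ≤ 0}, ‖x ((σ : ℤ) + s)‖
  have hinit : ∀ m : ℤ, m ≤ σ → ‖x m‖ ≤ M := by
    intro m hm
    have h := le_ciSup hbdd ⟨m - σ, by omega⟩
    simpa using h
  have hM0 : 0 ≤ M := (norm_nonneg _).trans (hinit σ le_rfl)
  have key : ∀ q : ℕ, ∀ m : ℤ, m ≤ (σ : ℤ) + q → ‖x m‖ ≤ M + C * (1 - a ^ q) / (1 - a) := by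
    intro q
    induction q with
    | zero =>
      intro m hm
      simpa using hinit m (by simpa using hm)
    | succ q ih =>
      intro m hm
      have hpow : 0 ≤ a ^ q := pow_nonneg ha0 q
      have hS : C * (1 - a ^ (q + 1)) / (1 - a) = C * (1 - a ^ q) / (1 - a) + C * a ^ q := by
        field_simp
        ring
      have hS' : C * (1 - a ^ (q + 1)) / (1 - a) = a * (C * (1 - a ^ q) / (1 - a)) + C := by
        field_simp
        ring
      rcases le_or_gt m ((σ : ℤ) + q) with h | h
      · have h1 := ih m h
        have h2 : 0 ≤ C * a ^ q := mul_nonneg hC hpow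
        rw [hS]
        linarith
      · obtain rfl : m = (σ : ℤ) + q + 1 := by push_cast at hm; omega
        have hB := (norm_nonneg _).trans (ih ((σ : ℤ) + q) le_rfl)
        have haB := mul_nonneg ha0 hB
        have haM : a * M ≤ M := mul_le_of_le_one_left hM0 ha1.le
        rw [hS']
        refine (pi_norm_le_iff_of_nonneg (by linarith)).2 fun i => ?_
        obtain ⟨k, hk⟩ := hrec ((σ : ℤ) + q) (by omega) i
        have h3 : |x ((σ : ℤ) + q - k) i| ≤ M + C * (1 - a ^ q) / (1 - a) :=
          (norm_le_pi_norm (x ((σ : ℤ) + q - k)) i).trans (ih _ (by omega))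
        have h4 := mul_le_mul_of_nonneg_left h3 ha0
        rw [Real.norm_eq_abs]
        linarith
  refine ⟨fun q _ s hs => key q _ (by omega), M + C / (1 - a), fun m => ?_⟩
  refine (key m.toNat m (by omega)).trans ?_
  have hpow : 0 ≤ a ^ m.toNat := pow_nonneg ha0 _
  have : C * (1 - a ^ m.toNat) ≤ C := mul_le_of_le_one_right hC (by linarith)
  gcongr
end

section
/- Let A be a real n×n matrix with non-positive off-diagonal entries that is an M-matrix. Then there is no vector z ∈ ℝⁿ with all components strictly positive such that all components of A z are strictly negative; equivalently, for every z > 0 (componentwise) there exists an index i with (A z)_i ≥ 0. (Key step in the proof of Theorem 3.1, derived from Theorem 2.1.) -/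
open Matrix in
/-- In the expansion of `det (1 + X A)` the coefficient of `X ^ k` is the sum of the principal
minors of `A` of order `k`; all of these are nonnegative, and the constant coefficient is `1`. -/
theorem one_le_det_one_add_smul {n : ℕ} {A : Matrix (Fin n) (Fin n) ℝ} (hA : IsMMatrix A)
    {s : ℝ} (hs : 0 ≤ s) : 1 ≤ (1 + s • A).det := by
  set p : Polynomial ℝ := (1 + (Polynomial.X : Polynomial ℝ) • A.map Polynomial.C).det with hp
  have hc : ∀ k, 0 ≤ p.coeff k := fun k => by
    rw [hp, coeff_det_one_add_X_smul_eq_sum_minors]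
    exact Finset.sum_nonneg fun t _ => hA.2 t
  have h0 : p.coeff 0 = 1 := by
    rw [hp, coeff_det_one_add_X_smul_eq_sum_minors]
    simp
  have he : p.eval s = (1 + s • A).det := by
    rw [hp, ← Polynomial.coe_evalRingHom, RingHom.map_det]
    congr 1
    ext i j
    rcases eq_or_ne i j with rfl | h
    · simp
      ring
    · simp [h]
      ring
  rw [← he, Polynomial.eval_eq_sum_range, ← h0]
  have := Finset.single_le_sum (f := fun k => p.coeff k * s ^ k)
    (fun k _ => mul_nonneg (hc k) (pow_nonneg hs k))
    (Finset.mem_range.2 (Nat.succ_pos p.natDegree))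
  simpa using this

theorem mulVec_nonpos_of_eq_zero {n : ℕ} {B : Matrix (Fin n) (Fin n) ℝ}
    (hB : ∀ i j, i ≠ j → B i j ≤ 0) {v : Fin n → ℝ} (hv : ∀ i, 0 ≤ v i) {i : Fin n}
    (hi : v i = 0) : B.mulVec v i ≤ 0 := by
  change ∑ j, B i j * v j ≤ 0
  refine Finset.sum_nonpos fun j _ => ?_
  by_cases h : i = j
  · simp [← h, hi]
  · exact mul_nonpos_of_nonpos_of_nonneg (hB i j h) (hv j)

open Matrix in
theorem IsMMatrix.not_mulVec_neg {n : ℕ} (hn : 1 ≤ n) {A : Matrix (Fin n) (Fin n) ℝ}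
    (hA : IsMMatrix A) {z : Fin n → ℝ} (hz : ∀ i, 0 < z i) (hAz : ∀ i, A.mulVec z i < 0) :
    False := by
  have : Nonempty (Fin n) := ⟨⟨0, hn⟩⟩
  let M : ℝ → Matrix (Fin n) (Fin n) ℝ := fun s => 1 + s • A
  let x : ℝ → Fin n → ℝ := fun s => (M s).adjugate *ᵥ z
  have hM : ∀ s, 0 ≤ s → ∀ i j, i ≠ j → M s i j ≤ 0 := fun s hs i j h => by
    simpa [M, Matrix.one_apply, h] using mul_nonpos_of_nonneg_of_nonpos hs (hA.1 i j h)
  have hMx : ∀ s i, (M s *ᵥ x s) i = (M s).det * z i := fun s i => by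
    simp [x, mulVec_mulVec, mul_adjugate, smul_mulVec]
  have hdet : ∀ s, 0 ≤ s → 0 < (M s).det := fun s hs =>
    zero_lt_one.trans_le (one_le_det_one_add_smul hA hs)
  have hMc : Continuous M := by fun_prop
  have hxc : Continuous x := hMc.matrix_adjugate.matrix_mulVec continuous_const
  let f : ℝ → ℝ := fun s => Finset.univ.inf' Finset.univ_nonempty (x s)
  have hfc : Continuous f :=
    Continuous.finset_inf'_apply _ fun i _ => (continuous_apply i).comp hxc
  have hf0 : 0 < f 0 := by
    simp [f, Finset.lt_inf'_iff, x, M, hz]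
  have hfne : ∀ s, 0 ≤ s → f s ≠ 0 := fun s hs h => by
    obtain ⟨i, -, hi⟩ := Finset.exists_mem_eq_inf' Finset.univ_nonempty (x s)
    have hx : ∀ j, 0 ≤ x s j := fun j => h ▸ Finset.inf'_le (x s) (Finset.mem_univ j)
    have h1 := mulVec_nonpos_of_eq_zero (hM s hs) hx (hi.symm.trans h)
    rw [hMx] at h1
    exact h1.not_gt (mul_pos (hdet s hs) (hz i))
  have hx : ∀ s, 0 ≤ s → ∀ i, 0 < x s i := fun s hs i => by
    have hfs : 0 < f s := by
      by_contra! hneg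
      obtain ⟨t, ht, h⟩ := intermediate_value_Icc' hs hfc.continuousOn ⟨hneg, hf0.le⟩
      exact hfne t ht.1 h
    exact hfs.trans_le (Finset.inf'_le (x s) (Finset.mem_univ i))
  obtain ⟨s, hs, hMz⟩ : ∃ s, 0 ≤ s ∧ ∀ i, (M s *ᵥ z) i < 0 := by
    have h : ∀ᶠ s : ℝ in Filter.atTop, 0 ≤ s ∧ ∀ i, (M s *ᵥ z) i < 0 := by
      refine (Filter.eventually_ge_atTop 0).and (Filter.eventually_all.2 fun i => ?_)
      filter_upwards [Filter.eventually_gt_atTop (z i / -(A *ᵥ z) i)] with s hs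
      rw [div_lt_iff₀ (neg_pos.2 (hAz i))] at hs
      have : (M s *ᵥ z) i = z i + s * (A *ᵥ z) i := by
        simp [M, add_mulVec, smul_mulVec]
      linarith
    exact h.exists
  -- The least `c` with `c • x s - z ≥ 0` is the largest of the ratios `z i / x s i`.
  obtain ⟨i, hi⟩ := Finite.exists_max fun i => z i / x s i
  set c := z i / x s i with hc
  have hcpos : 0 < c := div_pos (hz i) (hx s hs i)
  have hv : ∀ j, 0 ≤ (c • x s - z) j := fun j => by
    have := (div_le_iff₀ (hx s hs j)).1 (hi j)
    simpa using this
  have hvi : (c • x s - z) i = 0 := by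
    simp [hc, div_mul_cancel₀ _ (hx s hs i).ne']
  have h1 := mulVec_nonpos_of_eq_zero (hM s hs) hv hvi
  rw [mulVec_sub, mulVec_smul, Pi.sub_apply, Pi.smul_apply, hMx, smul_eq_mul] at h1
  have := mul_pos hcpos (mul_pos (hdet s hs) (hz i))
  linarith [hMz i]

/-- Key step in the proof of Theorem 3.1: if `A` is an M-matrix then there is no strictly
positive vector `z` with `A z` strictly negative in every component; equivalently, for
every `z > 0` there is an index `i` with `(A z)ᵢ ≥ 0`. -/
theorem MMatrix_no_positive_vector_with_negative_image
    (n : ℕ) (hn : 1 ≤ n) (A : Matrix (Fin n) (Fin n) ℝ) (hA : IsMMatrix A) :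
    (¬ ∃ z : Fin n → ℝ, (∀ i, 0 < z i) ∧ ∀ i, A.mulVec z i < 0) ∧
    ∀ z : Fin n → ℝ, (∀ i, 0 < z i) → ∃ i, 0 ≤ A.mulVec z i := by
  refine ⟨fun ⟨z, hz, hAz⟩ => hA.not_mulVec_neg hn hz hAz, fun z hz => ?_⟩
  by_contra! h
  exact hA.not_mulVec_neg hn hz h
end
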